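/- arXiv:2008.12457 — 2 statements merged into one kernel-verified Lean document; each statement's English description precedes it below -/
import Mathlib

section
/- Let F be a finite field with q elements, a ∈ F nonzero, and n = 2m with m ≥ 1. Writing g(ℓ) = ∏_{i=0}^{ℓ−1}(q^ℓ − q^i) for the order of GL(ℓ,F), the number of n×n matrices X over F satisfying X² = a•X equals 2 + g(2m)/g(m)² + Σ_{k=1}^{m−1} 2·g(2m)/(g(2m−k)·g(k)), where each of the displayed quotients is an integer (it is the index of a centralizer, hence an orbit size). -/
/-- `glOrder q ℓ = ∏_{i=0}^{ℓ-1} (q^ℓ - q^i)`, the order of `GL(ℓ, F_q)`. -/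
def glOrder (q ℓ : ℕ) : ℕ := ∏ i ∈ Finset.range ℓ, (q ^ ℓ - q ^ i)

/-!
Since `a` is invertible, `X ↦ a⁻¹ • X` turns the solutions of `X² = a • X` into idempotents. An
isomorphism `e : K^r × K^s ≃ V` determines the idempotent of `V` projecting onto `e (K^r × 0)` along
`e (0 × K^s)`, and the isomorphisms inducing a given idempotent `f` are exactly the pairs of
isomorphisms `K^r ≃ range f`, `K^s ≃ ker f`. Counting isomorphisms through the induced idempotent,
`V` has `g (r + s) / (g r * g s)` idempotents of rank `r`. Summing over the rank, the terms of ranks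
`k` and `2m - k` agree.
-/

open Finset Module

section Splitting

open LinearMap

variable {R U W M : Type*} [Ring R] [AddCommGroup U] [Module R U] [AddCommGroup W] [Module R W]
  [AddCommGroup M] [Module R M]

/-- The endomorphism of `M` attached to a splitting `e : U × W ≃ M`: the projection onto `e (U × 0)`
along `e (0 × W)`. -/
def splittingProj (e : (U × W) ≃ₗ[R] M) : End R M :=
  e.toLinearMap ∘ₗ inl R U W ∘ₗ fst R U W ∘ₗ e.symm.toLinearMap

@[simp]
lemma splittingProj_apply_apply (e : (U × W) ≃ₗ[R] M) (x : U × W) :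
    splittingProj e (e x) = e (x.1, 0) := by
  simp [splittingProj]

lemma isIdempotentElem_splittingProj (e : (U × W) ≃ₗ[R] M) :
    IsIdempotentElem (splittingProj e) := by
  ext x
  obtain ⟨x, rfl⟩ := e.surjective x
  simp

/-- The isomorphism of `U` with the range of `splittingProj e`, given by `u ↦ e (u, 0)`. -/
def splittingRangeEquiv (e : (U × W) ≃ₗ[R] M) : U ≃ₗ[R] range (splittingProj e) where
  toFun u := ⟨e (u, 0), e (u, 0), by simp⟩
  map_add' u u' := Subtype.ext (by simp [← map_add])
  map_smul' c u := Subtype.ext (by simp [← map_smul])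
  invFun x := (e.symm x).1
  left_inv u := by simp
  right_inv := by
    rintro ⟨_, x, rfl⟩
    obtain ⟨x, rfl⟩ := e.surjective x
    simp

/-- The isomorphism of `W` with the kernel of `splittingProj e`, given by `w ↦ e (0, w)`. -/
def splittingKerEquiv (e : (U × W) ≃ₗ[R] M) : W ≃ₗ[R] ker (splittingProj e) where
  toFun w := ⟨e (0, w), by simp⟩
  map_add' w w' := Subtype.ext (by simp [← map_add])
  map_smul' c w := Subtype.ext (by simp [← map_smul])
  invFun x := (e.symm x).2
  left_inv w := by simp
  right_inv := by
    rintro ⟨x, hx⟩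
    obtain ⟨⟨u, w⟩, rfl⟩ := e.surjective x
    obtain rfl : u = 0 := by simpa using hx
    simp

@[simp]
lemma coe_splittingRangeEquiv_apply (e : (U × W) ≃ₗ[R] M) (u : U) :
    (splittingRangeEquiv e u : M) = e (u, 0) :=
  rfl

@[simp]
lemma coe_splittingKerEquiv_apply (e : (U × W) ≃ₗ[R] M) (w : W) :
    (splittingKerEquiv e w : M) = e (0, w) :=
  rfl

lemma splittingProj_prodCongr_trans_prodEquivOfIsCompl {f : End R M} (hf : IsIdempotentElem f)
    (u : U ≃ₗ[R] range f) (w : W ≃ₗ[R] ker f) :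
    splittingProj ((u.prodCongr w).trans (Submodule.prodEquivOfIsCompl _ _ hf.isCompl)) = f := by
  set e := (u.prodCongr w).trans (Submodule.prodEquivOfIsCompl _ _ hf.isCompl)
  ext x
  obtain ⟨x, rfl⟩ := e.surjective x
  have apply_range : f (u x.1) = u x.1 := hf.mem_range_iff.1 (u x.1).2
  have apply_ker : f (w x.2) = 0 := (w x.2).2
  rw [splittingProj_apply_apply]
  simp [e, apply_range, apply_ker]

/-- The splittings inducing a given idempotent `f` amount to a pair of isomorphisms of the two
factors with the range and the kernel of `f`. -/
noncomputable def splittingProjFiberEquiv {f : End R M} (hf : IsIdempotentElem f) :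
    {e : (U × W) ≃ₗ[R] M // splittingProj e = f} ≃ (U ≃ₗ[R] range f) × (W ≃ₗ[R] ker f) where
  toFun e := ((splittingRangeEquiv e.1).trans (.ofEq _ _ (by rw [e.2])),
    (splittingKerEquiv e.1).trans (.ofEq _ _ (by rw [e.2])))
  invFun p := ⟨(p.1.prodCongr p.2).trans (Submodule.prodEquivOfIsCompl _ _ hf.isCompl),
    splittingProj_prodCongr_trans_prodEquivOfIsCompl hf p.1 p.2⟩
  left_inv := by
    rintro ⟨e, rfl⟩
    ext x
    simp [← map_add]
  right_inv := by
    rintro ⟨u, w⟩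
    ext x <;> simp

end Splitting

section GLOrder

lemma glOrder_pos {q : ℕ} (hq : 1 < q) (n : ℕ) : 0 < glOrder q n :=
  prod_pos fun _ hi ↦ Nat.sub_pos_of_lt (Nat.pow_lt_pow_right hq (mem_range.1 hi))

/-- The index of the block-diagonal subgroup `GL(n - k, F_q) × GL(k, F_q)` in `GL(n, F_q)`. The
division is exact for `q` the order of a finite field and `k ≤ n`. -/
def glBlockIndex (q n k : ℕ) : ℕ :=
  glOrder q n / (glOrder q (n - k) * glOrder q k)

lemma glBlockIndex_zero_right {q : ℕ} (hq : 1 < q) (n : ℕ) : glBlockIndex q n 0 = 1 := by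
  simp [glBlockIndex, glOrder.eq_1 q 0, Nat.div_self (glOrder_pos hq n)]

lemma glBlockIndex_symm (q : ℕ) {n k : ℕ} (hk : k ≤ n) :
    glBlockIndex q n (n - k) = glBlockIndex q n k := by
  rw [glBlockIndex, glBlockIndex, Nat.sub_sub_self hk, mul_comm]

lemma glBlockIndex_two_mul_self (q m : ℕ) :
    glBlockIndex q (2 * m) m = glOrder q (2 * m) / glOrder q m ^ 2 := by
  rw [glBlockIndex, two_mul, Nat.add_sub_cancel, sq]

end GLOrder

section Counting

variable {K U W V : Type*} [Field K] [Fintype K] [AddCommGroup U] [Module K U] [Module.Finite K U]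
  [AddCommGroup W] [Module K W] [Module.Finite K W] [AddCommGroup V] [Module K V]
  [Module.Finite K V]

lemma card_linearEquiv_eq_glOrder (h : finrank K U = finrank K V) :
    Nat.card (U ≃ₗ[K] V) = glOrder (Fintype.card K) (finrank K V) := by
  let bU := LinearEquiv.ofFinrankEq (R := K) U (Fin (finrank K V) → K) (by simp [h])
  let bV := LinearEquiv.ofFinrankEq (R := K) V (Fin (finrank K V) → K) (by simp)
  let toAut : (U ≃ₗ[K] V) ≃ ((Fin (finrank K V) → K) ≃ₗ[K] (Fin (finrank K V) → K)) :=
    { toFun := fun e ↦ (bU.symm.trans e).trans bV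
      invFun := fun e ↦ (bU.trans e).trans bV.symm
      left_inv := fun e ↦ by ext; simp
      right_inv := fun e ↦ by ext; simp }
  rw [Nat.card_congr (toAut.trans ((LinearMap.GeneralLinearGroup.generalLinearEquiv K _).symm.trans
    Matrix.GeneralLinearGroup.toLin.symm).toEquiv), Matrix.card_GL_field, glOrder, prod_range]

lemma card_splittingProj_fiber {f : End K V} (hf : IsIdempotentElem f)
    (hU : finrank K U = finrank K (LinearMap.range f))
    (hW : finrank K W = finrank K (LinearMap.ker f)) :
    Nat.card {e : (U × W) ≃ₗ[K] V // splittingProj e = f} =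
      glOrder (Fintype.card K) (finrank K U) * glOrder (Fintype.card K) (finrank K W) := by
  rw [Nat.card_congr (splittingProjFiberEquiv hf), Nat.card_prod, card_linearEquiv_eq_glOrder hU,
    card_linearEquiv_eq_glOrder hW, hU, hW]

lemma card_idempotent_mul_glOrder {r s : ℕ} (h : finrank K V = r + s) :
    Nat.card {f : End K V // IsIdempotentElem f ∧ finrank K (LinearMap.range f) = r} *
      (glOrder (Fintype.card K) r * glOrder (Fintype.card K) s) =
      glOrder (Fintype.card K) (r + s) := by
  have : Finite V := Module.finite_of_finite K
  have : Finite (End K V) := Module.finite_of_finite K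
  have : Finite (((Fin r → K) × (Fin s → K)) ≃ₗ[K] V) := DFunLike.finite _
  have := Fintype.ofFinite {f : End K V // IsIdempotentElem f ∧ finrank K (LinearMap.range f) = r}
  let proj (e : ((Fin r → K) × (Fin s → K)) ≃ₗ[K] V) :
      {f : End K V // IsIdempotentElem f ∧ finrank K (LinearMap.range f) = r} :=
    ⟨splittingProj e, isIdempotentElem_splittingProj e, by
      simpa using (splittingRangeEquiv e).finrank_eq.symm⟩
  have card_fiber (f) : Nat.card {e // proj e = f} =
      glOrder (Fintype.card K) r * glOrder (Fintype.card K) s := by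
    obtain ⟨f, hf, hr⟩ := f
    have hs : finrank K (LinearMap.ker f) = s := by
      have := f.finrank_range_add_finrank_ker
      lia
    simpa only [proj, Subtype.ext_iff, finrank_fin_fun] using
      card_splittingProj_fiber (U := Fin r → K) (W := Fin s → K) hf (by simp [hr]) (by simp [hs])
  rw [← h, ← card_linearEquiv_eq_glOrder (U := (Fin r → K) × (Fin s → K)) (by simp [h]),
    ← Nat.card_congr (Equiv.sigmaFiberEquiv proj), Nat.card_sigma]
  simp only [card_fiber, sum_const, card_univ, Nat.card_eq_fintype_card, smul_eq_mul]

lemma glOrder_mul_glOrder_dvd (K : Type*) [Field K] [Fintype K] (r s : ℕ) :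
    glOrder (Fintype.card K) r * glOrder (Fintype.card K) s ∣ glOrder (Fintype.card K) (r + s) :=
  Dvd.intro_left _ (card_idempotent_mul_glOrder (V := Fin (r + s) → K) (by simp))

lemma card_idempotent_finrank_range_eq {k : ℕ} (hk : k ≤ finrank K V) :
    Nat.card {f : End K V // IsIdempotentElem f ∧ finrank K (LinearMap.range f) = k} =
      glBlockIndex (Fintype.card K) (finrank K V) k := by
  have count := card_idempotent_mul_glOrder (V := V) (Nat.add_sub_of_le hk).symm
  rw [Nat.add_sub_of_le hk, mul_comm (glOrder _ k)] at count
  have pos := glOrder_pos (Fintype.one_lt_card (α := K))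
  exact Nat.eq_div_of_mul_eq_left (Nat.mul_pos (pos _) (pos _)).ne' count

lemma card_idempotent_eq_sum (K V : Type*) [Field K] [Fintype K] [AddCommGroup V] [Module K V]
    [Module.Finite K V] :
    Nat.card {f : End K V // IsIdempotentElem f} =
      ∑ k ∈ range (finrank K V + 1), glBlockIndex (Fintype.card K) (finrank K V) k := by
  classical
  have : Finite (End K V) := Module.finite_of_finite K
  have : Fintype (End K V) := Fintype.ofFinite _
  rw [Nat.card_eq_fintype_card, Fintype.card_subtype, card_eq_sum_card_fiberwise
    (f := fun f ↦ finrank K (LinearMap.range f)) (t := range (finrank K V + 1))]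
  · refine sum_congr rfl fun k hk ↦ ?_
    rw [← card_idempotent_finrank_range_eq (mem_range_succ_iff.1 hk), Nat.card_eq_fintype_card,
      Fintype.card_subtype, filter_filter]
  · intro f _
    simpa [Nat.lt_succ_iff] using (LinearMap.range f).finrank_le

end Counting

section Scaling

variable {K A : Type*} [GroupWithZero K] [Mul A] [MulAction K A] [IsScalarTower K A A]
  [SMulCommClass K A A] {a : K}

lemma isIdempotentElem_inv_smul_iff (ha : a ≠ 0) {x : A} :
    IsIdempotentElem (a⁻¹ • x) ↔ x * x = a • x := by
  rw [IsIdempotentElem, smul_mul_smul_comm, mul_smul, inv_smul_eq_iff₀ ha, smul_inv_smul₀ ha,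
    inv_smul_eq_iff₀ ha]

lemma card_mul_self_eq_smul_eq_card_idempotent (ha : a ≠ 0) :
    Nat.card {x : A | x * x = a • x} = Nat.card {x : A // IsIdempotentElem x} :=
  Nat.card_congr <| (MulAction.toPerm (Units.mk0 a ha)⁻¹).subtypeEquiv fun _ ↦
    (isIdempotentElem_inv_smul_iff ha).symm

end Scaling

lemma card_matrix_mul_self_eq_smul {K ι : Type*} [Field K] [Fintype K] [Fintype ι] {a : K}
    (ha : a ≠ 0) :
    Nat.card {X : Matrix ι ι K | X * X = a • X} =
      ∑ k ∈ range (Fintype.card ι + 1), glBlockIndex (Fintype.card K) (Fintype.card ι) k := by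
  classical
  rw [card_mul_self_eq_smul_eq_card_idempotent ha, ← finrank_fintype_fun_eq_card K,
    ← card_idempotent_eq_sum]
  refine Nat.card_congr (Matrix.toLinAlgEquiv'.toEquiv.subtypeEquiv fun X ↦ ?_)
  simp [IsIdempotentElem, ← map_mul]

lemma sum_range_two_mul_add_one_of_symm {A : Type*} [AddCommMonoid A] (m : ℕ) (c : ℕ → A)
    (hc : ∀ k < m, c (2 * m - k) = c k) :
    ∑ k ∈ range (2 * m + 1), c k = c m + 2 • ∑ k ∈ range m, c k := by
  have upper_half : ∑ k ∈ range m, c (m + 1 + k) = ∑ k ∈ range m, c k := by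
    rw [← sum_range_reflect]
    refine sum_congr rfl fun k hk ↦ ?_
    have := mem_range.1 hk
    rw [← hc k this]
    congr 1
    lia
  rw [show 2 * m + 1 = m + 1 + m by ring, sum_range_add, upper_half, sum_range_succ, two_nsmul]
  abel

theorem stmt_9 (F : Type*) [Field F] [Fintype F] (a : F) (ha : a ≠ 0) (m : ℕ) (hm : 1 ≤ m)
    (q : ℕ) (hq : q = Fintype.card F) :
    glOrder q m ^ 2 ∣ glOrder q (2 * m) ∧
    (∀ k ∈ Finset.Icc 1 (m - 1), glOrder q (2 * m - k) * glOrder q k ∣ glOrder q (2 * m)) ∧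
    Nat.card {X : Matrix (Fin (2 * m)) (Fin (2 * m)) F | X * X = a • X} =
      2 + glOrder q (2 * m) / glOrder q m ^ 2 +
        ∑ k ∈ Finset.Icc 1 (m - 1),
          2 * (glOrder q (2 * m) / (glOrder q (2 * m - k) * glOrder q k)) := by
  subst hq
  refine ⟨?_, fun k hk ↦ ?_, ?_⟩
  · rw [sq, two_mul]
    exact glOrder_mul_glOrder_dvd F m m
  · have hk : k ≤ 2 * m := by grind
    simpa only [Nat.sub_add_cancel hk] using glOrder_mul_glOrder_dvd F (2 * m - k) k
  · have Icc_eq_Ico : Icc 1 (m - 1) = Ico 1 m := by grind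
    calc
      _ = ∑ k ∈ range (2 * m + 1), glBlockIndex (Fintype.card F) (2 * m) k := by
        simpa only [Fintype.card_fin] using card_matrix_mul_self_eq_smul (ι := Fin (2 * m)) ha
      _ = glBlockIndex (Fintype.card F) (2 * m) m + 2 • (glBlockIndex (Fintype.card F) (2 * m) 0 +
          ∑ k ∈ Icc 1 (m - 1), glBlockIndex (Fintype.card F) (2 * m) k) := by
        rw [sum_range_two_mul_add_one_of_symm m _ fun k hk ↦ glBlockIndex_symm _ (by lia),
          Icc_eq_Ico, sum_range_eq_add_Ico _ hm]
      _ = _ := by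
        rw [glBlockIndex_zero_right Fintype.one_lt_card, glBlockIndex_two_mul_self, smul_eq_mul,
          mul_add, mul_sum, ← add_assoc, add_comm (_ / _)]
        rfl
end

section
/- Let F be a finite field with q elements and let a ∈ F be nonzero. Then the number of 3×3 matrices X over F satisfying X² = a•X is exactly 2q²(q² + q + 1) + 2. -/
/-!
An endomorphism `f` with `f² = a • f` and `a ≠ 0` is multiplication by `a` on its range `W`, so it
is an extension to the whole space of the homothety `a : W → W`, and every such extension arises
once. Over a field with `q` elements there are `q ^ (r * (n - r))` extensions when `dim W = r` and
the space has dimension `n`, which reduces the count to counting subspaces of each dimension.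
For `n = 3` there are `q² + q + 1` lines and, by duality, as many planes.
-/

open Module LinearMap

section Extension

variable {R V : Type*} [CommSemiring R] [AddCommMonoid V] [Module R V]

theorem subtype_comp_mul_self_eq_smul {a : R} {W : Submodule R V} {g : V →ₗ[R] W}
    (hg : g ∘ₗ W.subtype = a • LinearMap.id) :
    (W.subtype ∘ₗ g) * (W.subtype ∘ₗ g) = a • (W.subtype ∘ₗ g) :=
  LinearMap.ext fun v ↦ congrArg Subtype.val (LinearMap.congr_fun hg (g v))

theorem range_eq_top_of_comp_subtype_eq_smul_id {a : R} (ha : IsUnit a) {W : Submodule R V}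
    {g : V →ₗ[R] W} (hg : g ∘ₗ W.subtype = a • LinearMap.id) : range g = ⊤ :=
  range_eq_top.2 fun w ↦ by
    obtain ⟨b, hba⟩ := ha.exists_left_inv
    exact ⟨(b • w : W), by simpa [smul_smul, hba] using LinearMap.congr_fun hg (b • w)⟩

theorem rangeRestrict_comp_subtype_of_mul_self_eq_smul {a : R} {f : End R V}
    (hf : f * f = a • f) : f.rangeRestrict ∘ₗ (range f).subtype = a • LinearMap.id := by
  ext ⟨_, v, rfl⟩
  exact LinearMap.congr_fun hf v

/-- The endomorphisms satisfying `f² = a • f` (the multiples by `a` of the projections) correspond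
to pairs of a submodule `W`, which is the range of `f`, and a linear map `g : V → W` extending
multiplication by `a` on `W`. -/
noncomputable def sigmaExtensionEquivMulSelfEqSMul {a : R} (ha : IsUnit a) :
    (Σ W : Submodule R V, {g : V →ₗ[R] W // g ∘ₗ W.subtype = a • LinearMap.id}) ≃
      {f : End R V // f * f = a • f} :=
  .ofBijective (fun ⟨W, g, hg⟩ ↦ ⟨W.subtype ∘ₗ g, subtype_comp_mul_self_eq_smul hg⟩) <| by
    refine ⟨?_, fun ⟨f, hf⟩ ↦
      ⟨⟨range f, f.rangeRestrict, rangeRestrict_comp_subtype_of_mul_self_eq_smul hf⟩, rfl⟩⟩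
    rintro ⟨W, g, hg⟩ ⟨W', g', hg'⟩ h
    have comp_eq : W.subtype ∘ₗ g = W'.subtype ∘ₗ g' := congrArg Subtype.val h
    obtain rfl : W = W' := by
      simpa [range_comp, range_eq_top_of_comp_subtype_eq_smul_id ha hg,
        range_eq_top_of_comp_subtype_eq_smul_id ha hg'] using congrArg range comp_eq
    obtain rfl : g = g' := LinearMap.cancel_left W.injective_subtype |>.1 comp_eq
    rfl

end Extension

section Field

variable {K V M : Type*} [Field K] [AddCommGroup V] [Module K V] [AddCommGroup M] [Module K M]

theorem natCard_linearMap_comp_subtype_eq [FiniteDimensional K V] [FiniteDimensional K M]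
    (p : Submodule K V) (h : p →ₗ[K] M) :
    Nat.card {g : V →ₗ[K] M // g ∘ₗ p.subtype = h} =
      Nat.card K ^ (finrank K (V ⧸ p) * finrank K M) := by
  let restrict : (V →ₗ[K] M) →ₗ[K] (p →ₗ[K] M) := lcomp K M p.subtype
  have restrict_surjective : Function.Surjective restrict := fun h ↦ exists_extend h
  let fiberEquiv : {g // restrict g = h} ≃ ker restrict :=
    restrict.toAddMonoidHom.fiberEquivKerOfSurjective restrict_surjective h
  have finrank_ker : finrank K (ker restrict) = finrank K (V ⧸ p) * finrank K M := by
    have rank_nullity := finrank_range_add_finrank_ker restrict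
    rw [range_eq_top.2 restrict_surjective, finrank_top, finrank_linearMap,
      finrank_linearMap, ← p.finrank_quotient_add_finrank, add_mul] at rank_nullity
    lia
  exact (Nat.card_congr fiberEquiv).trans (finrank_ker ▸ natCard_eq_pow_finrank)

theorem natCard_end_mul_self_eq_smul [Finite V] {a : K} (ha : a ≠ 0) :
    Nat.card {f : End K V // f * f = a • f} =
      ∑ r ∈ Finset.range (finrank K V + 1),
        Nat.card {W : Submodule K V // finrank K W = r} *
          Nat.card K ^ (r * (finrank K V - r)) := by
  classical
  have := Fintype.ofFinite (Submodule K V)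
  have finrank_mem (W : Submodule K V) : finrank K W ∈ Finset.range (finrank K V + 1) :=
    Finset.mem_range_succ_iff.2 W.finrank_le
  have (W : Submodule K V) : Finite (V →ₗ[K] W) := DFunLike.finite _
  calc Nat.card {f : End K V // f * f = a • f}
    _ = ∑ W : Submodule K V, Nat.card K ^ (finrank K W * (finrank K V - finrank K W)) := by
      rw [← Nat.card_congr (sigmaExtensionEquivMulSelfEqSMul ha.isUnit), Nat.card_sigma]
      simp only [natCard_linearMap_comp_subtype_eq, Submodule.finrank_quotient, mul_comm]
    _ = _ := by
      rw [← Finset.sum_fiberwise_of_maps_to' (fun W _ ↦ finrank_mem W)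
        fun r ↦ Nat.card K ^ (r * (finrank K V - r))]
      simp only [Finset.sum_const, smul_eq_mul, Nat.card_eq_fintype_card, Fintype.card_subtype]

theorem natCard_submodule_finrank_eq_zero [FiniteDimensional K V] :
    Nat.card {W : Submodule K V // finrank K W = 0} = 1 := by
  simp [Submodule.finrank_eq_zero]

theorem natCard_submodule_finrank_eq_one [Finite K] :
    Nat.card {W : Submodule K V // finrank K W = 1} =
      ∑ i ∈ Finset.range (finrank K V), Nat.card K ^ i := by
  rw [← Nat.card_congr (Projectivization.equivSubmodule K V),
    Projectivization.card_of_finrank K V rfl]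

theorem natCard_submodule_finrank_eq_of_add_eq [FiniteDimensional K V] {r s : ℕ}
    (h : r + s = finrank K V) :
    Nat.card {W : Submodule K V // finrank K W = r} =
      Nat.card {W : Submodule K V // finrank K W = s} := by
  let toDual : V ≃ₗ[K] Dual K V := .ofFinrankEq _ _ Subspace.dual_finrank_eq.symm
  let annihilator : Submodule K V ≃ Submodule K V :=
    (Subspace.orderIsoFiniteDimensional.toEquiv.trans OrderDual.ofDual).trans
      (Submodule.orderIsoMapComap toDual.symm).toEquiv
  refine Nat.card_congr (annihilator.subtypeEquiv fun W ↦ ?_)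
  have : finrank K (annihilator W) = finrank K W.dualAnnihilator :=
    toDual.symm.finrank_map_eq W.dualAnnihilator
  have := Subspace.finrank_add_finrank_dualAnnihilator_eq W
  lia

end Field

theorem stmt_18 (F : Type*) [Field F] [Fintype F] (a : F) (ha : a ≠ 0) :
    Nat.card {X : Matrix (Fin 3) (Fin 3) F | X * X = a • X} =
      2 * Fintype.card F ^ 2 * (Fintype.card F ^ 2 + Fintype.card F + 1) + 2 := by
  have finrank_eq : finrank F (Fin 3 → F) = 3 := finrank_fin_fun F
  have card_planes := natCard_submodule_finrank_eq_of_add_eq (K := F) (V := Fin 3 → F)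
    (r := 2) (s := 1) finrank_eq.symm
  have card_top := natCard_submodule_finrank_eq_of_add_eq (K := F) (V := Fin 3 → F)
    (r := 3) (s := 0) finrank_eq.symm
  let matrixEquivEnd : {X : Matrix (Fin 3) (Fin 3) F | X * X = a • X} ≃
      {f : End F (Fin 3 → F) // f * f = a • f} :=
    Matrix.toLinAlgEquiv'.toEquiv.subtypeEquiv fun X ↦ by
      simp [← map_mul, ← map_smul]
  rw [Nat.card_congr matrixEquivEnd, natCard_end_mul_self_eq_smul ha, finrank_eq]
  simp only [Finset.sum_range_succ, Finset.sum_range_zero, card_planes, card_top,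
    natCard_submodule_finrank_eq_zero, natCard_submodule_finrank_eq_one, finrank_eq,
    Nat.card_eq_fintype_card (α := F)]
  ring
end
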